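/- arXiv:2605.30479 — 2 statements merged into one kernel-verified Lean document; each statement's English description precedes it below -/
import Mathlib

section
/- There exist a countable instance space 𝒳, a countable label space 𝒴, and a concept class ℋ ⊆ 𝒴^𝒳 that has an infinite LCL-Littlestone (LCLL) tree but has no infinite indifferent LCLL tree; similarly, there exists a concept class over countable 𝒳 and 𝒴 that has an infinite Littlestone tree but has no infinite indifferent Littlestone tree. -/
/-!
One class `pathClass` settles both parts. A concept is coded by a finite set `c` of positions
`(m, j)`, read as the bits of an eventually-false path through the LCLL tree shape. An instance
`(K, T, I)` asks for bit `(K, I)` along a path whose bits at levels below `K` are `T`. A concept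
whose path meets the instance answers with that bit; every other concept answers with its own code
`c`, which identifies it completely. The obvious tree of all paths is shattered, which gives an
infinite LCLL tree and, reading only the bits `(m, 0)`, an infinite Littlestone tree.

In an indifferent tree, let `v` precede `u`. If the concept chosen at `u` were off the path at an
instance of `v`, its label there would be its own code, so all concepts chosen below `u` would
coincide with it; but two of them disagree on an instance of `u`. Hence every concept chosen at `u`
is on path at all instances of all earlier nodes (`onPath_of_indiffLCLL`,
`onPath_of_indiffLit`). Take two deep concepts that split at the root instance `p`: every instance
on the leftmost branch lies on the path of both, and only finitely many instances do, since their
level is at most that of `p` (`finite_common`). The leftmost instances are however pairwise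
distinct, a contradiction (`false_of_chain`).
-/

open Filter MeasureTheory
open scoped ENNReal

attribute [local instance] Classical.propDecidable

noncomputable section


/-- An infinite LCL-Littlestone (LCLL) tree for `H`.
`x k u i` is the `i`-th instance (`i ≤ k`) of the tuple labeling the depth-`k` node on
the path described by the bits `u m j` (`m < k`, `j ≤ m`); `y k u i` is the label of that
instance along the branch additionally described by the bits `u k j` for `j ≤ i`. -/
def IsLCLLTree {X Y : Type*} (H : Set (X → Y))
    (x : ℕ → (ℕ → ℕ → Bool) → ℕ → X)
    (y : ℕ → (ℕ → ℕ → Bool) → ℕ → Y) : Prop :=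
  (∀ k : ℕ, ∀ u u' : ℕ → ℕ → Bool,
      (∀ m < k, ∀ j ≤ m, u m j = u' m j) → ∀ i ≤ k, x k u i = x k u' i) ∧
  (∀ k i : ℕ, i ≤ k → ∀ u u' : ℕ → ℕ → Bool,
      (∀ m < k, ∀ j ≤ m, u m j = u' m j) → (∀ j ≤ i, u k j = u' k j) →
      y k u i = y k u' i) ∧
  (∀ k i : ℕ, i ≤ k → ∀ u u' : ℕ → ℕ → Bool,
      (∀ m < k, ∀ j ≤ m, u m j = u' m j) → (∀ j < i, u k j = u' k j) →
      u k i ≠ u' k i → y k u i ≠ y k u' i) ∧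
  (∀ u : ℕ → ℕ → Bool, ∀ n : ℕ, ∃ h ∈ H, ∀ k ≤ n, ∀ i ≤ k, h (x k u i) = y k u i)

/-- `H` has an infinite LCLL tree. -/
def HasInfLCLLTree {X Y : Type*} (H : Set (X → Y)) : Prop :=
  ∃ x y, IsLCLLTree H x y

/-- Lexicographic (left-to-right) order between two depth-`k` node paths. -/
def NodePathLt (k : ℕ) (a b : ℕ → ℕ → Bool) : Prop :=
  ∃ m < k, ∃ j ≤ m, a m j = false ∧ b m j = true ∧
    ∀ m' < k, ∀ j' ≤ m', (m' < m ∨ (m' = m ∧ j' < j)) → a m' j' = b m' j'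

/-- Breadth-first-search order between nodes of an LCLL tree: smaller depth first, and
lexicographic order within a level. -/
def NodeBFSLt (kv : ℕ) (uv : ℕ → ℕ → Bool) (ku : ℕ) (uu : ℕ → ℕ → Bool) : Prop :=
  kv < ku ∨ (kv = ku ∧ NodePathLt kv uv uu)

/-- The node `(kw, uw)` is a descendant of the node `(ku, uu)`. -/
def NodeDesc (ku : ℕ) (uu : ℕ → ℕ → Bool) (kw : ℕ) (uw : ℕ → ℕ → Bool) : Prop :=
  ku ≤ kw ∧ ∀ m < ku, ∀ j ≤ m, uu m j = uw m j

/-- An indifferent infinite LCLL tree: there is a choice of consistent concepts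
`hC n u ∈ H`, one for each finite branch, such that whenever a node `v` precedes a node
`u` in BFS order and `w` is a descendant of `u`, the concepts chosen for (the branches
ending at) `u` and `w` agree on all the instances labeling the node `v`. -/
def IsIndiffLCLLTree {X Y : Type*} (H : Set (X → Y))
    (x : ℕ → (ℕ → ℕ → Bool) → ℕ → X)
    (y : ℕ → (ℕ → ℕ → Bool) → ℕ → Y) : Prop :=
  IsLCLLTree H x y ∧
  ∃ hC : ℕ → (ℕ → ℕ → Bool) → X → Y,
    (∀ n u, hC n u ∈ H) ∧
    (∀ n : ℕ, ∀ u u' : ℕ → ℕ → Bool,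
        (∀ m ≤ n, ∀ j ≤ m, u m j = u' m j) → hC n u = hC n u') ∧
    (∀ n : ℕ, ∀ u : ℕ → ℕ → Bool, ∀ k ≤ n, ∀ i ≤ k, hC n u (x k u i) = y k u i) ∧
    (∀ kv ku kw : ℕ, ∀ uv uu uw : ℕ → ℕ → Bool,
        NodeBFSLt kv uv ku uu → NodeDesc ku uu kw uw →
        ∀ i ≤ kv, hC ku uu (x kv uv i) = hC kw uw (x kv uv i))

/-- `H` has an infinite indifferent LCLL tree. -/
def HasInfIndiffLCLLTree {X Y : Type*} (H : Set (X → Y)) : Prop :=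
  ∃ x y, IsIndiffLCLLTree H x y

/-- An infinite Littlestone tree for `H`: `x u` is the instance at the node indexed by
the finite binary string `u`, and `lab u b` is the label of the edge from that node to
its `b`-child. -/
def IsLitTree {X Y : Type*} (H : Set (X → Y))
    (x : List Bool → X) (lab : List Bool → Bool → Y) : Prop :=
  (∀ u : List Bool, lab u false ≠ lab u true) ∧
  (∀ u : List Bool, ∃ h ∈ H, ∀ i < u.length,
      h (x (u.take i)) = lab (u.take i) (u.getD i false))

/-- `H` has an infinite Littlestone tree. -/
def HasInfLitTree {X Y : Type*} (H : Set (X → Y)) : Prop :=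
  ∃ x lab, IsLitTree H x lab

/-- Numeric value of a binary string (most significant bit first). -/
def bitVal (l : List Bool) : ℕ := l.foldl (fun n b => 2 * n + cond b 1 0) 0

/-- Breadth-first-search order on nodes of the infinite binary tree. -/
def ListBFSLt (v u : List Bool) : Prop :=
  v.length < u.length ∨ (v.length = u.length ∧ bitVal v < bitVal u)

/-- An indifferent infinite Littlestone tree: there is a choice of consistent concepts
`hC u ∈ H`, one per finite branch, such that if `v` precedes `u` in BFS order and `w` is
a descendant of `u`, then the concepts chosen for `u` and `w` agree on `x v`. -/
def IsIndiffLitTree {X Y : Type*} (H : Set (X → Y))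
    (x : List Bool → X) (lab : List Bool → Bool → Y) : Prop :=
  IsLitTree H x lab ∧
  ∃ hC : List Bool → X → Y,
    (∀ u, hC u ∈ H) ∧
    (∀ u : List Bool, ∀ i < u.length,
        hC u (x (u.take i)) = lab (u.take i) (u.getD i false)) ∧
    (∀ v u w : List Bool, ListBFSLt v u → u <+: w → hC u (x v) = hC w (x v))

/-- `H` has an infinite indifferent Littlestone tree. -/
def HasInfIndiffLitTree {X Y : Type*} (H : Set (X → Y)) : Prop :=
  ∃ x lab, IsIndiffLitTree H x lab

/-! ### The class -/

/-- An instance `(K, T, I)`: the question "which bit is at `(K, I)`?", asked of the paths whose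
true positions at levels below `K` are exactly `T`. -/
abbrev PathInst : Type := ℕ × Finset (ℕ × ℕ) × ℕ

/-- The path with set `c` of true positions meets the instance `q = (K, T, I)`. The bound `I ≤ K`
keeps finite the number of instances of a given level met by a path. -/
def OnPath (c : Finset (ℕ × ℕ)) (q : PathInst) : Prop :=
  c.filter (fun p => p.1 < q.1) = q.2.1 ∧ q.2.2 ≤ q.1

/-- The concept coded by `c`: the requested bit on the path of `c`, and the code `c` itself
elsewhere. -/
def pathConcept (c : Finset (ℕ × ℕ)) (q : PathInst) : Bool ⊕ Finset (ℕ × ℕ) :=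
  if OnPath c q then Sum.inl (decide ((q.1, q.2.2) ∈ c)) else Sum.inr c

/-- The class of all path concepts. -/
def pathClass : Set (PathInst → Bool ⊕ Finset (ℕ × ℕ)) := Set.range pathConcept

/-- The label given off the path determines the concept. -/
theorem eq_of_not_onPath {c d : Finset (ℕ × ℕ)} {q : PathInst}
    (h : pathConcept c q = pathConcept d q) (hc : ¬ OnPath c q) : c = d := by
  unfold pathConcept at h
  rw [if_neg hc] at h
  split_ifs at h
  exact Sum.inr.inj h

/-- Two paths meeting `p` and answering differently there share no instance of a level above that
of `p`, so the instances they share are determined by `p`, up to finitely many choices. -/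
theorem finite_common (p : PathInst) :
    {q : PathInst | ∃ c d, OnPath c p ∧ OnPath d p ∧ pathConcept c p ≠ pathConcept d p ∧
      OnPath c q ∧ OnPath d q}.Finite := by
  have hfin : (((Finset.range (p.1 + 1) ×ˢ Finset.range (p.1 + 1)).image
      (fun a : ℕ × ℕ => ((a.1, p.2.1.filter (fun b => b.1 < a.1), a.2) : PathInst)) :
        Finset PathInst) : Set PathInst).Finite := Finset.finite_toSet _
  refine hfin.subset ?_
  rintro ⟨K, T, I⟩ ⟨c, d, hcp, hdp, hne, hcq, hdq⟩
  have hK : K ≤ p.1 := by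
    by_contra hlt
    apply hne
    unfold pathConcept
    rw [if_pos hcp, if_pos hdp]
    have h := Finset.ext_iff.1 (hcq.1.trans hdq.1.symm) (p.1, p.2.2)
    simp only [Finset.mem_filter] at h
    have hlt' : p.1 < K := by omega
    simp only [hlt', and_true] at h
    simp [h]
  have hI : I ≤ K := hcq.2
  simp only [Finset.coe_image, Set.mem_image, Finset.mem_coe, Finset.mem_product,
    Finset.mem_range]
  refine ⟨(K, I), ⟨by omega, by simp only; omega⟩, ?_⟩
  have hT : p.2.1.filter (fun b => b.1 < K) = T := by
    have h1 : c.filter (fun b => b.1 < K) = T := hcq.1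
    rw [← hcp.1, ← h1, Finset.filter_filter]
    refine Finset.filter_congr fun b _ => ?_
    constructor
    · exact fun h => h.2
    · exact fun h => ⟨by omega, h⟩
  simp only [hT]

/-- Infinitely many distinct instances cannot all be shared by two paths that split at the first
one (the two paths may vary with the instance). -/
theorem false_of_chain (z : ℕ → PathInst) (hinj : ∀ m n, m < n → z m ≠ z n)
    (h : ∀ n, ∃ c d, OnPath c (z 0) ∧ OnPath d (z 0) ∧
      pathConcept c (z 0) ≠ pathConcept d (z 0) ∧ OnPath c (z n) ∧ OnPath d (z n)) : False := by
  have hz : Function.Injective z := by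
    intro m n hmn
    rcases lt_trichotomy m n with hlt | heq | hlt
    · exact absurd hmn (hinj m n hlt)
    · exact heq
    · exact absurd hmn.symm (hinj n m hlt)
  exact Set.infinite_of_injective_forall_mem hz h (finite_common (z 0))

/-! ### LCLL trees -/

/-- The true positions of `u` at levels below `k`. -/
def truePos (k : ℕ) (u : ℕ → ℕ → Bool) : Finset (ℕ × ℕ) :=
  (Finset.range k ×ˢ Finset.range k).filter (fun p => p.2 ≤ p.1 ∧ u p.1 p.2 = true)

theorem mem_truePos {k : ℕ} {u : ℕ → ℕ → Bool} {p : ℕ × ℕ} :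
    p ∈ truePos k u ↔ p.1 < k ∧ p.2 ≤ p.1 ∧ u p.1 p.2 = true := by
  simp only [truePos, Finset.mem_filter, Finset.mem_product, Finset.mem_range]
  constructor
  · rintro ⟨⟨h1, _⟩, h2, h3⟩; exact ⟨h1, h2, h3⟩
  · rintro ⟨h1, h2, h3⟩; exact ⟨⟨h1, by omega⟩, h2, h3⟩

theorem hasInfLCLLTree_pathClass : HasInfLCLLTree pathClass := by
  refine ⟨fun k u i => (k, truePos k u, i), fun k u i => Sum.inl (u k i), ?_, ?_, ?_, ?_⟩
  · intro k u u' h i _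
    have : truePos k u = truePos k u' := by
      ext p
      simp only [mem_truePos]
      constructor
      · rintro ⟨h1, h2, h3⟩; exact ⟨h1, h2, by rw [← h _ h1 _ h2]; exact h3⟩
      · rintro ⟨h1, h2, h3⟩; exact ⟨h1, h2, by rw [h _ h1 _ h2]; exact h3⟩
    simp only [this]
  · intro k i _ u u' _ h
    simp only [h i le_rfl]
  · intro k i _ u u' _ _ hne h
    exact hne (Sum.inl.inj h)
  · intro u n
    refine ⟨_, ⟨truePos (n + 1) u, rfl⟩, fun k hk i hi => ?_⟩
    have hon : OnPath (truePos (n + 1) u) (k, truePos k u, i) := by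
      refine ⟨?_, hi⟩
      ext p
      simp only [Finset.mem_filter, mem_truePos]
      constructor
      · rintro ⟨⟨_, h2, h3⟩, h4⟩; exact ⟨h4, h2, h3⟩
      · rintro ⟨h1, h2, h3⟩; exact ⟨⟨by omega, h2, h3⟩, h1⟩
    unfold pathConcept
    rw [if_pos hon]
    congr 1
    rw [Bool.eq_iff_iff, decide_eq_true_iff, mem_truePos]
    constructor
    · exact fun h => h.2.2
    · exact fun h => ⟨by simp only; omega, hi, h⟩

/-- In an indifferent LCLL tree every chosen concept is on path at all instances of all earlier
nodes: otherwise it would coincide with the concept for the branch obtained by flipping the first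
bit below the same node, and these two disagree at the first instance of that node. -/
theorem onPath_of_indiffLCLL {x : ℕ → (ℕ → ℕ → Bool) → ℕ → PathInst}
    {y : ℕ → (ℕ → ℕ → Bool) → ℕ → Bool ⊕ Finset (ℕ × ℕ)}
    (ht : IsLCLLTree pathClass x y) {φ : ℕ → (ℕ → ℕ → Bool) → Finset (ℕ × ℕ)}
    (hcons : ∀ n : ℕ, ∀ u : ℕ → ℕ → Bool, ∀ k ≤ n, ∀ i ≤ k,
      pathConcept (φ n u) (x k u i) = y k u i)
    (hind : ∀ kv ku kw : ℕ, ∀ uv uu uw : ℕ → ℕ → Bool,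
      NodeBFSLt kv uv ku uu → NodeDesc ku uu kw uw →
      ∀ i ≤ kv, pathConcept (φ ku uu) (x kv uv i) = pathConcept (φ kw uw) (x kv uv i))
    {kv ku : ℕ} {uv uu : ℕ → ℕ → Bool} (hlt : NodeBFSLt kv uv ku uu) {i : ℕ} (hi : i ≤ kv) :
    OnPath (φ ku uu) (x kv uv i) := by
  by_contra hoff
  obtain ⟨hx, -, hy, -⟩ := ht
  set uw : ℕ → ℕ → Bool := fun m j => if m = ku then !(uu m j) else uu m j with huw
  have hag : ∀ m < ku, ∀ j ≤ m, uu m j = uw m j := by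
    intro m hm j _
    simp [huw, hm.ne]
  have hφ := eq_of_not_onPath (hind kv ku ku uv uu uw hlt ⟨le_rfl, hag⟩ i hi) hoff
  refine hy ku 0 (Nat.zero_le _) uu uw hag (by simp) (by simp [huw]) ?_
  rw [← hcons ku uu ku le_rfl 0 (Nat.zero_le _), ← hcons ku uw ku le_rfl 0 (Nat.zero_le _), ← hφ,
    hx ku uu uw hag 0 (Nat.zero_le _)]

theorem not_hasInfIndiffLCLLTree_pathClass : ¬ HasInfIndiffLCLLTree pathClass := by
  rintro ⟨x, y, ht, hC, hmem, -, hcons, hind⟩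
  choose φ hφ using hmem
  simp only [← hφ] at hcons hind
  have hon := @onPath_of_indiffLCLL x y ht φ hcons hind
  obtain ⟨hx, hy, hne, -⟩ := ht
  -- `o` is the leftmost branch, and `e n` leaves it at the first bit of level `n`.
  set o : ℕ → ℕ → Bool := fun _ _ => false with ho
  set e : ℕ → ℕ → ℕ → Bool := fun n m _ => decide (m = n) with he
  have hoe : ∀ n, ∀ m < n, ∀ j ≤ m, o m j = e n m j := by
    intro n m hm j _
    simp [ho, he, hm.ne]
  have hyne : ∀ n, y n o 0 ≠ y n (e n) 0 := fun n =>
    hne n 0 (Nat.zero_le _) o (e n) (hoe n) (by simp) (by simp [ho, he])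
  have hxe : ∀ n, ∀ m ≤ n, x m o 0 = x m (e n) 0 := fun n m hm =>
    hx m o (e n) (fun k hk j hj => hoe n k (by omega) j hj) 0 (Nat.zero_le _)
  refine false_of_chain (fun n => x n o 0) ?_ ?_
  · intro m n hmn heq
    apply hyne n
    rw [← hcons n o n le_rfl 0 (Nat.zero_le _), ← hcons n (e n) n le_rfl 0 (Nat.zero_le _),
      ← hxe n n le_rfl, ← heq, hcons n o m hmn.le 0 (Nat.zero_le _), hxe n m hmn.le,
      hcons n (e n) m hmn.le 0 (Nat.zero_le _)]
    refine hy m 0 (Nat.zero_le _) o (e n) (fun k hk j hj => hoe n k (by omega) j hj) ?_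
    intro j hj
    exact hoe n m hmn j (by omega)
  · intro n
    refine ⟨φ (n + 1) o, φ (n + 1) (e 0), hon (Or.inl (by omega)) le_rfl,
      hon (Or.inl (by omega)) le_rfl, ?_, hon (Or.inl (by omega)) (Nat.zero_le _),
      hon (Or.inl (by omega)) (Nat.zero_le _)⟩
    have h := hyne 0
    rwa [← hcons (n + 1) o 0 (Nat.zero_le _) 0 le_rfl,
      ← hcons (n + 1) (e 0) 0 (Nat.zero_le _) 0 le_rfl, ← hxe 0 0 le_rfl] at h

/-! ### Littlestone trees -/

/-- The code of a binary string: its bits are put at the positions `(m, 0)`. -/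
def strPos (u : List Bool) : Finset (ℕ × ℕ) :=
  ((Finset.range u.length).filter (fun m => u.getD m false = true)).image (fun m => (m, 0))

theorem mem_strPos {u : List Bool} {p : ℕ × ℕ} :
    p ∈ strPos u ↔ p.1 < u.length ∧ u.getD p.1 false = true ∧ p.2 = 0 := by
  obtain ⟨m, j⟩ := p
  simp only [strPos, Finset.mem_image, Finset.mem_filter, Finset.mem_range, Prod.mk.injEq]
  constructor
  · rintro ⟨a, ⟨h1, h2⟩, rfl, rfl⟩; exact ⟨h1, h2, rfl⟩
  · rintro ⟨h1, h2, rfl⟩; exact ⟨m, ⟨h1, h2⟩, rfl, rfl⟩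

theorem hasInfLitTree_pathClass : HasInfLitTree pathClass := by
  refine ⟨fun u => (u.length, strPos u, 0), fun _ b => Sum.inl b, by simp, ?_⟩
  intro u
  refine ⟨_, ⟨strPos u, rfl⟩, fun i hi => ?_⟩
  have hlen : (u.take i).length = i := by simp; omega
  have hon : OnPath (strPos u) ((u.take i).length, strPos (u.take i), 0) := by
    refine ⟨?_, Nat.zero_le _⟩
    ext p
    simp only [Finset.mem_filter, mem_strPos, hlen]
    have hget : p.1 < i → (u.take i).getD p.1 false = u.getD p.1 false := by
      intro h
      simp [List.getD_eq_getElem?_getD, h]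
    constructor
    · rintro ⟨⟨_, h2, h3⟩, h4⟩; exact ⟨h4, by rw [hget h4]; exact h2, h3⟩
    · rintro ⟨h1, h2, h3⟩; exact ⟨⟨by omega, by rw [← hget h1]; exact h2, h3⟩, h1⟩
  unfold pathConcept
  rw [if_pos hon]
  congr 1
  rw [Bool.eq_iff_iff, decide_eq_true_iff, mem_strPos]
  simp only [hlen]
  constructor
  · exact fun h => h.2.1
  · exact fun h => ⟨hi, h, trivial⟩

/-- In an indifferent Littlestone tree every chosen concept is on path at all earlier nodes:
otherwise the concepts chosen for both children of its node would coincide. -/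
theorem onPath_of_indiffLit {x : List Bool → PathInst}
    {lab : List Bool → Bool → Bool ⊕ Finset (ℕ × ℕ)}
    (hlab : ∀ u : List Bool, lab u false ≠ lab u true) {φ : List Bool → Finset (ℕ × ℕ)}
    (hcons : ∀ u : List Bool, ∀ i < u.length,
      pathConcept (φ u) (x (u.take i)) = lab (u.take i) (u.getD i false))
    (hind : ∀ v u w : List Bool, ListBFSLt v u → u <+: w →
      pathConcept (φ u) (x v) = pathConcept (φ w) (x v))
    {v u : List Bool} (hlt : ListBFSLt v u) : OnPath (φ u) (x v) := by
  by_contra hoff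
  have hchild : ∀ b, pathConcept (φ u) (x u) = lab u b := by
    intro b
    have h := hcons (u ++ [b]) u.length (by simp)
    rw [← eq_of_not_onPath (hind v u (u ++ [b]) hlt (List.prefix_append _ _)) hoff] at h
    simpa [List.getD_eq_getElem?_getD] using h
  exact hlab u ((hchild false).symm.trans (hchild true))

theorem not_hasInfIndiffLitTree_pathClass : ¬ HasInfIndiffLitTree pathClass := by
  rintro ⟨x, lab, ⟨hlab, -⟩, hC, hmem, hcons, hind⟩
  choose φ hφ using hmem
  simp only [← hφ] at hcons hind
  have hon := @onPath_of_indiffLit x lab hlab φ hcons hind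
  refine false_of_chain (fun n => x (List.replicate n false)) ?_ ?_
  · intro m n hmn heq
    -- The concepts of both children of the `n`-th leftmost node follow the edge to the left
    -- at the `m`-th one.
    have hm : ∀ b, pathConcept (φ (List.replicate n false ++ [b])) (x (List.replicate m false)) =
        lab (List.replicate m false) false := by
      intro b
      have h := hcons (List.replicate n false ++ [b]) m (by simp; omega)
      have h1 : (List.replicate n false ++ [b]).take m = List.replicate m false := by
        rw [List.take_append_of_le_length (by simp; omega), List.take_replicate,
          min_eq_left hmn.le]
      have h2 : (List.replicate n false ++ [b]).getD m false = false := by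
        rw [List.getD_append _ _ _ _ (by simpa using hmn)]
        simp
      rwa [h1, h2] at h
    have hn : ∀ b, pathConcept (φ (List.replicate n false ++ [b])) (x (List.replicate n false)) =
        lab (List.replicate n false) b := by
      intro b
      have h := hcons (List.replicate n false ++ [b]) n (by simp)
      simpa [List.getD_eq_getElem?_getD, List.take_append] using h
    apply hlab (List.replicate n false)
    rw [← hn false, ← hn true, ← heq, hm, hm]
  · intro n
    have hbfs : ∀ b, ∀ m ≤ n, ListBFSLt (List.replicate m false) (b :: List.replicate n false) :=
      fun b m hm => Or.inl (by simp; omega)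
    refine ⟨φ (false :: List.replicate n false), φ (true :: List.replicate n false),
      hon (hbfs _ 0 (Nat.zero_le _)), hon (hbfs _ 0 (Nat.zero_le _)), ?_,
      hon (hbfs _ n le_rfl), hon (hbfs _ n le_rfl)⟩
    have h := fun b => hcons (b :: List.replicate n false) 0 (by simp)
    simp only [List.take_zero, List.getD_cons_zero] at h
    simp only [List.replicate_zero, h]
    exact hlab []

/-- There is a concept class over countable spaces with an infinite
LCLL tree but no infinite indifferent LCLL tree; similarly with an infinite Littlestone
tree but no infinite indifferent Littlestone tree. -/
theorem statement12 :
    (∃ (X Y : Type) (H : Set (X → Y)), Countable X ∧ Countable Y ∧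
        HasInfLCLLTree H ∧ ¬ HasInfIndiffLCLLTree H) ∧
    (∃ (X Y : Type) (H : Set (X → Y)), Countable X ∧ Countable Y ∧
        HasInfLitTree H ∧ ¬ HasInfIndiffLitTree H) := by
  exact ⟨⟨_, _, pathClass, inferInstance, inferInstance,
      hasInfLCLLTree_pathClass, not_hasInfIndiffLCLLTree_pathClass⟩,
    ⟨_, _, pathClass, inferInstance, inferInstance,
      hasInfLitTree_pathClass, not_hasInfIndiffLitTree_pathClass⟩⟩
end
end

section
/- There exist an instance space 𝒳 and a binary concept class ℋ ⊆ {0,1}^𝒳 such that ℋ has an infinite indifferent LCL-Littlestone (LCLL) tree (and hence, by the linear lower bound, is not universally transductively online learnable), yet ℋ has no Level-Constrained Littlestone (LCL) tree of infinite depth: for every instance sequence, the depth of any LCL tree for ℋ built on that sequence is finite. -/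
/-!
Take as instances all triples `(k, v, i)` consisting of a depth, a node of that depth (given by its
path) and a position `i` in the tuple of the node, so that the instances of the tree are pairwise
distinct. For each finite branch, take the concept that labels the instances along the branch by
the bits of the branch and every other instance by `false`. These concepts shatter the
tree by construction. The choice is indifferent: a node `v` preceding `u` in breadth-first order is
either a proper ancestor of `u`, and then branches through `u` share its label, or it lies on
no branch through `u`, and then it is labeled `false`.

In a binary class an LCL tree amounts to a sequence whose prefixes are all shattered
(`exists_concept_of_pattern`). Two instances that are both labeled `true` by a concept lie on a
common branch. If their nodes had different depths, then labeling the deeper one `true` would force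
the label of the shallower one, so the pair would not be shattered
(`depth_le_of_shattered`). Thus a sequence with shattered prefixes stays inside the tuple of a
single node (`node_eq_of_shattered`), which is finite, while its terms are pairwise distinct.
-/


open Filter MeasureTheory
open scoped ENNReal

attribute [local instance] Classical.propDecidable

noncomputable section


/-- `H` has an infinite Level-Constrained Littlestone (LCL) tree: all nodes at depth `k`
carry the same instance `x k`; `lab k u b` is the label of the `b`-edge out of the
depth-`k` node on the path `u`, depends only on `u j` for `j < k`, its two values are
distinct, and every finite root-to-node path is consistent with some concept of `H`. -/
def HasInfLCLTree {X Y : Type*} (H : Set (X → Y)) : Prop :=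
  ∃ x : ℕ → X, ∃ lab : ℕ → (ℕ → Bool) → Bool → Y,
    (∀ k : ℕ, ∀ u u' : ℕ → Bool, (∀ j < k, u j = u' j) → ∀ b, lab k u b = lab k u' b) ∧
    (∀ k : ℕ, ∀ u : ℕ → Bool, lab k u false ≠ lab k u true) ∧
    (∀ u : ℕ → Bool, ∀ n : ℕ, ∃ h ∈ H, ∀ k < n, h (x k) = lab k u (u k))

/-- Canonical representative of the depth-`k` node on the path `u`: the bits that do not
take part in describing the node are set to `false`. -/
def truncPath (k : ℕ) (u : ℕ → ℕ → Bool) : ℕ → ℕ → Bool :=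
  fun m j => if m < k ∧ j ≤ m then u m j else false

/-- Instances `(k, v, i)`: the `i`-th entry of the tuple at the depth-`k` node `v`. -/
abbrev NodeInstance : Type := ℕ × (ℕ → ℕ → Bool) × ℕ

/-- The concept of the finite branch through depths `0, …, n` described by `u`: the bits of `u`
on the instances along the branch, and `false` elsewhere. -/
def branchConcept (n : ℕ) (u : ℕ → ℕ → Bool) : NodeInstance → Bool :=
  fun p => decide (p.1 ≤ n ∧ p.2.2 ≤ p.1 ∧ p.2.1 = truncPath p.1 u ∧ u p.1 p.2.2 = true)

/-- The class of all branch concepts. -/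
def branchClass : Set (NodeInstance → Bool) := {h | ∃ n u, h = branchConcept n u}

lemma truncPath_eq_iff {k : ℕ} {u u' : ℕ → ℕ → Bool} :
    truncPath k u = truncPath k u' ↔ ∀ m < k, ∀ j ≤ m, u m j = u' m j := by
  constructor
  · intro h m hm j hj
    have := congrFun (congrFun h m) j
    simpa [truncPath, hm, hj] using this
  · intro h
    funext m j
    by_cases hc : m < k ∧ j ≤ m
    · simp [truncPath, hc, h m hc.1 j hc.2]
    · simp [truncPath, hc]

lemma branchConcept_eq_true_iff {n : ℕ} {u : ℕ → ℕ → Bool} {k : ℕ} {v : ℕ → ℕ → Bool} {i : ℕ} :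
    branchConcept n u (k, v, i) = true ↔
      k ≤ n ∧ i ≤ k ∧ v = truncPath k u ∧ u k i = true := by
  simp [branchConcept]

lemma branchConcept_self {n : ℕ} {u : ℕ → ℕ → Bool} {k i : ℕ} (hk : k ≤ n) (hi : i ≤ k) :
    branchConcept n u (k, truncPath k u, i) = u k i := by
  rw [Bool.eq_iff_iff, branchConcept_eq_true_iff]
  simp [hk, hi]

lemma hasInfIndiffLCLLTree_branchClass : HasInfIndiffLCLLTree branchClass := by
  refine ⟨fun k u i => (k, truncPath k u, i), fun k u i => u k i, ⟨?_, ?_, ?_, ?_⟩,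
    branchConcept, fun n u => ⟨n, u, rfl⟩, ?_, ?_, ?_⟩
  · intro k u u' h i _
    simp only [truncPath_eq_iff.2 h]
  · intro k i _ u u' _ h
    exact h i le_rfl
  · intro k i _ u u' _ _ h
    exact h
  · intro u n
    exact ⟨_, ⟨n, u, rfl⟩, fun k hk i hi => branchConcept_self hk hi⟩
  · intro n u u' h
    funext ⟨k, v, i⟩
    rw [Bool.eq_iff_iff, branchConcept_eq_true_iff, branchConcept_eq_true_iff]
    refine and_congr_right fun hk => and_congr_right fun hi => ?_
    rw [h k hk i hi, truncPath_eq_iff.2 fun m hm j hj => h m (hm.le.trans hk) j hj]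
  · intro n u k hk i hi
    exact branchConcept_self hk hi
  · intro kv ku kw uv uu uw hlt hdesc i hi
    obtain ⟨hk, hd⟩ := hdesc
    rw [Bool.eq_iff_iff, branchConcept_eq_true_iff, branchConcept_eq_true_iff]
    rcases hlt with hlt | ⟨rfl, m, hm, j, hj, hf, ht, -⟩
    · rw [truncPath_eq_iff.2 fun m hm j hj => hd m (hm.trans hlt) j hj, hd kv hlt i hi]
      simp [hi, hlt.le, hlt.le.trans hk]
    -- Distinct nodes of equal depth: `v` lies on neither branch.
    · have h1 : truncPath kv uv ≠ truncPath kv uu := fun h => by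
        have := truncPath_eq_iff.1 h m hm j hj
        simp [hf, ht] at this
      have h2 : truncPath kv uv ≠ truncPath kv uw := by
        rwa [← truncPath_eq_iff.2 hd]
      simp [h1, h2]

/-- With two labels, the two edges out of a node carry both labels, so every label pattern on the
first `n` levels of an LCL tree is that of some path, hence realized by a concept. -/
lemma exists_concept_of_pattern {X : Type} {H : Set (X → Bool)} {x : ℕ → X}
    {lab : ℕ → (ℕ → Bool) → Bool → Bool}
    (hdep : ∀ k : ℕ, ∀ u u' : ℕ → Bool, (∀ j < k, u j = u' j) → ∀ b, lab k u b = lab k u' b)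
    (hne : ∀ k : ℕ, ∀ u : ℕ → Bool, lab k u false ≠ lab k u true)
    (hcon : ∀ u : ℕ → Bool, ∀ n : ℕ, ∃ h ∈ H, ∀ k < n, h (x k) = lab k u (u k))
    (b : ℕ → Bool) (n : ℕ) : ∃ h ∈ H, ∀ k < n, h (x k) = b k := by
  have key : ∃ u : ℕ → Bool, ∀ k < n, lab k u (u k) = b k := by
    induction n with
    | zero => exact ⟨fun _ => false, by simp⟩
    | succ n ih =>
      obtain ⟨u, hu⟩ := ih
      obtain ⟨c, hc⟩ : ∃ c, lab n u c = b n := by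
        by_cases h : lab n u false = b n
        · exact ⟨_, h⟩
        · refine ⟨true, ?_⟩
          have := hne n u
          revert h this
          cases lab n u false <;> cases lab n u true <;> cases b n <;> simp
      have hlab : ∀ k ≤ n, ∀ d, lab k (Function.update u n c) d = lab k u d := fun k hk d =>
        hdep k _ _ (fun j hj => Function.update_of_ne (by omega) _ _) d
      refine ⟨Function.update u n c, fun k hk => ?_⟩
      rw [hlab k (by omega)]
      rcases Nat.lt_succ_iff_lt_or_eq.1 hk with h | rfl
      · rw [Function.update_of_ne h.ne, hu k h]
      · rw [Function.update_self, hc]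
  obtain ⟨u, hu⟩ := key
  obtain ⟨h, hH, hh⟩ := hcon u n
  exact ⟨h, hH, fun k hk => (hh k hk).trans (hu k hk)⟩

/-- `branchClass` realizes all four label patterns on the pair `p`, `q`. -/
def ShatteredPair (p q : NodeInstance) : Prop :=
  ∀ a b : Bool, ∃ n u, branchConcept n u p = a ∧ branchConcept n u q = b

/-- If `p` were strictly shallower than `q`, the label `true` at `q` would determine the branch
down to the node of `q`, and with it the label of `p`. -/
lemma depth_le_of_shattered {p q : NodeInstance} (h : ShatteredPair p q) : q.1 ≤ p.1 := by
  obtain ⟨k, v, i⟩ := p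
  obtain ⟨k', v', i'⟩ := q
  by_contra hlt
  simp only [not_le] at hlt
  obtain ⟨n, u, h1, h2⟩ := h true true
  obtain ⟨n', u', h3, h4⟩ := h false true
  rw [branchConcept_eq_true_iff] at h1 h2 h4
  obtain ⟨-, hi, rfl, hb⟩ := h1
  obtain ⟨-, -, rfl, -⟩ := h2
  obtain ⟨hn, -, he, -⟩ := h4
  rw [truncPath_eq_iff] at he
  have : branchConcept n' u' (k, truncPath k u, i) = true :=
    branchConcept_eq_true_iff.2 ⟨by omega, hi,
      truncPath_eq_iff.2 fun m hm j hj => he m (hm.trans hlt) j hj, by rw [← he k hlt i hi, hb]⟩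
  simp [h3] at this

lemma node_eq_of_shattered {p q : NodeInstance} (h : ShatteredPair p q) :
    q.1 = p.1 ∧ q.2.1 = p.2.1 ∧ q.2.2 ≤ p.1 := by
  have h' : ShatteredPair q p := fun a b => by
    obtain ⟨n, u, h1, h2⟩ := h b a
    exact ⟨n, u, h2, h1⟩
  have hk : q.1 = p.1 := le_antisymm (depth_le_of_shattered h) (depth_le_of_shattered h')
  obtain ⟨k, v, i⟩ := p
  obtain ⟨k', v', i'⟩ := q
  obtain rfl : k' = k := hk
  obtain ⟨n, u, h1, h2⟩ := h true true
  rw [branchConcept_eq_true_iff] at h1 h2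
  exact ⟨rfl, h2.2.2.1.trans h1.2.2.1.symm, h2.2.1⟩

lemma not_hasInfLCLTree_branchClass : ¬ HasInfLCLTree branchClass := by
  rintro ⟨x, lab, hdep, hne, hcon⟩
  have hpat := exists_concept_of_pattern hdep hne hcon
  have hpair : ∀ m l, m ≠ l → ShatteredPair (x m) (x l) := by
    intro m l hml a b
    obtain ⟨h, ⟨n, u, rfl⟩, hh⟩ := hpat (fun t => if t = m then a else b) (m + l + 1)
    refine ⟨n, u, ?_, ?_⟩
    · simpa using hh m (by omega)
    · simpa [hml.symm] using hh l (by omega)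
  -- All later terms lie in the node of `x 0`, so their positions in the tuple are distinct
  -- and bounded by its depth.
  have h0 : ∀ m, _ := fun m => node_eq_of_shattered (hpair 0 (m + 1) (by omega))
  have hinj : Function.Injective fun m => (x (m + 1)).2.2 := by
    intro m l hml
    by_contra hne'
    obtain ⟨n, u, h1, h2⟩ := hpair (m + 1) (l + 1) (by omega) true false
    have : x (m + 1) = x (l + 1) := Prod.ext ((h0 m).1.trans (h0 l).1.symm)
      (Prod.ext ((h0 m).2.1.trans (h0 l).2.1.symm) hml)
    rw [this, h2] at h1
    exact Bool.false_ne_true h1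
  refine Set.infinite_of_injective_forall_mem hinj (s := Set.Iic (x 0).1) (fun m => (h0 m).2.2) ?_
  exact Set.finite_Iic _

/-- There are an instance space `X` and a binary concept class `H`
with an infinite indifferent LCLL tree but no infinite-depth LCL tree. -/
theorem statement13 :
    ∃ (X : Type) (H : Set (X → Bool)),
      HasInfIndiffLCLLTree H ∧ ¬ HasInfLCLTree H := by
  exact ⟨NodeInstance, branchClass, hasInfIndiffLCLLTree_branchClass,
    not_hasInfLCLTree_branchClass⟩
end
end
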